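/- For any two vertices s and s' of G, the Biggs–Merino polynomials with sinks s and s' coincide: B(G,s;y) = B(G,s';y) in ℤ[y]. In other words, the Biggs–Merino polynomial of a strongly connected finite directed multigraph does not depend on the choice of the sink vertex. -/

import Mathlib

open Finset Polynomial

namespace SandpileBM

variable {V E : Type} [Fintype V] [DecidableEq V] [Fintype E] [DecidableEq E]

/-- The number of edges from `v` to `w` in the multigraph given by `src`, `tgt`. -/
def numEdges (src tgt : E → V) (v w : V) : ℕ :=
  (Finset.univ.filter fun e => src e = v ∧ tgt e = w).card

/-- The out-degree of a vertex. -/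
def outdeg (src : E → V) (v : V) : ℕ :=
  (Finset.univ.filter fun e => src e = v).card

/-- The in-degree of a vertex. -/
def indeg (tgt : E → V) (v : V) : ℕ :=
  (Finset.univ.filter fun e => tgt e = v).card

/-- The digraph is strongly connected: any vertex is reachable from any other by
a directed path. -/
def StronglyConnected (src tgt : E → V) : Prop :=
  ∀ v w : V, Relation.ReflTransGen (fun a b => ∃ e : E, src e = a ∧ tgt e = b) v w

/-- Result of firing the vertex `v` on the chip configuration `c` (sinkless model). -/
def fire (src tgt : E → V) (c : V → ℕ) (v : V) : V → ℕ :=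
  fun w => c w + numEdges src tgt v w - (if w = v then outdeg src v else 0)

/-- One legal firing move in the sinkless model. -/
def FireStep (src tgt : E → V) (c d : V → ℕ) : Prop :=
  ∃ v : V, outdeg src v ≤ c v ∧ d = fire src tgt c v

/-- `Reach c d`: `d` is obtained from `c` by a finite sequence of legal firing moves. -/
def Reach (src tgt : E → V) : (V → ℕ) → (V → ℕ) → Prop :=
  Relation.ReflTransGen (FireStep src tgt)

/-- Stability of a chip configuration. -/
def Stable (src : E → V) (c : V → ℕ) : Prop :=
  ∀ v : V, c v < outdeg src v

/-- A chip configuration is recurrent if it is not stable and every configuration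
accessible from it can reach it back. -/
def Recurrent (src tgt : E → V) (c : V → ℕ) : Prop :=
  ¬ Stable src c ∧ ∀ d : V → ℕ, Reach src tgt c d → Reach src tgt d c

/-- Level (total number of chips) of a chip configuration. -/
def lvl (c : V → ℕ) : ℕ := ∑ v : V, c v

/-- Indicator function of the vertex `s`. -/
def deltaS (s : V) : V → ℕ := fun v => if v = s then 1 else 0

/-- Result of firing the vertex `v` on an `s`-configuration. -/
def sfire (src tgt : E → V) (s : V) (c : {v : V // v ≠ s} → ℕ) (v : {v : V // v ≠ s}) :
    {v : V // v ≠ s} → ℕ :=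
  fun w => c w + numEdges src tgt v.1 w.1 - (if w = v then outdeg src v.1 else 0)

/-- One legal s-firing move. -/
def SFireStep (src tgt : E → V) (s : V) (c d : {v : V // v ≠ s} → ℕ) : Prop :=
  ∃ v : {v : V // v ≠ s}, outdeg src v.1 ≤ c v ∧ d = sfire src tgt s c v

/-- `SReach c d`: `d` is obtained from `c` by a finite sequence of legal s-firing moves. -/
def SReach (src tgt : E → V) (s : V) :
    ({v : V // v ≠ s} → ℕ) → ({v : V // v ≠ s} → ℕ) → Prop :=
  Relation.ReflTransGen (SFireStep src tgt s)

/-- Stability of an `s`-configuration. -/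
def SStable (src : E → V) (s : V) (c : {v : V // v ≠ s} → ℕ) : Prop :=
  ∀ v : {v : V // v ≠ s}, c v < outdeg src v.1

/-- The stabilization `c°` of an `s`-configuration: the (for strongly connected digraphs,
unique) stable `s`-configuration reachable from `c` by legal s-firing moves. -/
noncomputable def stab (src tgt : E → V) (s : V) (c : {v : V // v ≠ s} → ℕ) :
    {v : V // v ≠ s} → ℕ :=
  Classical.epsilon fun d => SReach src tgt s c d ∧ SStable src s d

/-- An `s`-configuration `c` is s-recurrent if every `s`-configuration can be completed
to one whose stabilization is `c`. -/
def SRecurrent (src tgt : E → V) (s : V) (c : {v : V // v ≠ s} → ℕ) : Prop :=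
  ∀ c₁ : {v : V // v ≠ s} → ℕ, ∃ c₂ : {v : V // v ≠ s} → ℕ,
    stab src tgt s (c₁ + c₂) = c

/-- `β_s`, recording the number of edges from `s` to each other vertex. -/
def betaS (src tgt : E → V) (s : V) : {v : V // v ≠ s} → ℕ :=
  fun v => numEdges src tgt s v.1

/-- The relation `~_s` on s-recurrent configurations: `d = (c + k·β_s)°` for some `k`. -/
def SEquiv (src tgt : E → V) (s : V) (c d : {v : V // v ≠ s} → ℕ) : Prop :=
  ∃ k : ℕ, stab src tgt s (c + k • betaS src tgt s) = d

/-- Restriction of a chip configuration to `V ∖ {s}`. -/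
def restrictS (s : V) (c : V → ℕ) : {v : V // v ≠ s} → ℕ := fun v => c v.1

/-- Extension `c̄` of an `s`-configuration by `0` at `s`. -/
def extendS (s : V) (c : {v : V // v ≠ s} → ℕ) : V → ℕ :=
  fun v => if h : v = s then 0 else c ⟨v, h⟩

/-- The s-index `χ(c)`: the least `k` such that `c̄ + k·δ_s` is recurrent. -/
noncomputable def sIndex (src tgt : E → V) (s : V) (c : {v : V // v ≠ s} → ℕ) : ℕ :=
  sInf {k : ℕ | Recurrent src tgt (extendS s c + k • deltaS s)}

/-- `φ(c) := c̄ + χ(c)·δ_s`. -/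
noncomputable def phi (src tgt : E → V) (s : V) (c : {v : V // v ≠ s} → ℕ) : V → ℕ :=
  extendS s c + sIndex src tgt s c • deltaS s

/-- The s-level `slvl(c) := χ(c) + Σ_{v ≠ s} c(v)`. -/
noncomputable def slvl (src tgt : E → V) (s : V) (c : {v : V // v ≠ s} → ℕ) : ℕ :=
  sIndex src tgt s c + ∑ v : {v : V // v ≠ s}, c v

/-- The d-level `dlvl(c) := deg⁺(s) + Σ_{v ≠ s} c(v)`. -/
def dlvl (src : E → V) (s : V) (c : {v : V // v ≠ s} → ℕ) : ℕ :=
  outdeg src s + ∑ v : {v : V // v ≠ s}, c v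

/-- The set (as a type) of recurrent chip configurations. -/
abbrev RecL (src tgt : E → V) := {c : V → ℕ // Recurrent src tgt c}

/-- The setoid on recurrent configurations generated by the relation `~` (i.e. `⤳`). -/
def recLSetoid (src tgt : E → V) : Setoid (RecL src tgt) :=
  Relation.EqvGen.setoid fun a b => Reach src tgt a.1 b.1

/-- The set of `~`-classes of recurrent configurations. -/
abbrev RecLQuot (src tgt : E → V) := Quotient (recLSetoid src tgt)

/-- The set (as a type) of s-recurrent configurations. -/
abbrev RecS (src tgt : E → V) (s : V) := {c : {v : V // v ≠ s} → ℕ // SRecurrent src tgt s c}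

/-- The setoid on s-recurrent configurations generated by the relation `~_s`. -/
def recSSetoid (src tgt : E → V) (s : V) : Setoid (RecS src tgt s) :=
  Relation.EqvGen.setoid fun a b => SEquiv src tgt s a.1 b.1

/-- The set of `~_s`-classes of s-recurrent configurations. -/
abbrev RecSQuot (src tgt : E → V) (s : V) := Quotient (recSSetoid src tgt s)

/-- The level of a `~`-class of recurrent configurations (level is constant on classes). -/
noncomputable def lvlClass (src tgt : E → V) (q : RecLQuot src tgt) : ℕ :=
  sSup ((fun c : RecL src tgt => lvl c.1) '' {c | Quotient.mk (recLSetoid src tgt) c = q})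

/-- The s-level of a `~_s`-class (s-level is constant on classes). -/
noncomputable def slvlClass (src tgt : E → V) (s : V) (q : RecSQuot src tgt s) : ℕ :=
  sSup ((fun c : RecS src tgt s => slvl src tgt s c.1) ''
    {c | Quotient.mk (recSSetoid src tgt s) c = q})

/-- The d-level of a `~_s`-class: the maximum d-level over the class. -/
noncomputable def dlvlClass (src tgt : E → V) (s : V) (q : RecSQuot src tgt s) : ℕ :=
  sSup ((fun c : RecS src tgt s => dlvl src s c.1) ''
    {c | Quotient.mk (recSSetoid src tgt s) c = q})

/-- The Biggs–Merino polynomial `B(G,s;y) = Σ_{[c] ∈ Rec(G,s)/~_s} y^{dlvl([c])}`. -/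
noncomputable def BM (src tgt : E → V) (s : V) : Polynomial ℤ :=
  ∑ᶠ q : RecSQuot src tgt s, X ^ dlvlClass src tgt s q

/-- `LegalSeq l c d`: firing the vertices in the list `l` in order is a sequence of
legal firing moves transforming `c` into `d` (sinkless model). -/
def LegalSeq (src tgt : E → V) : List V → (V → ℕ) → (V → ℕ) → Prop
  | [], c, d => d = c
  | v :: l, c, d => outdeg src v ≤ c v ∧ LegalSeq src tgt l (fire src tgt c v) d

/-- `SLegalSeq l c d`: firing the vertices in the list `l` in order is a sequence of
legal s-firing moves transforming `c` into `d`. -/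
def SLegalSeq (src tgt : E → V) (s : V) :
    List {v : V // v ≠ s} → ({v : V // v ≠ s} → ℕ) → ({v : V // v ≠ s} → ℕ) → Prop
  | [], c, d => d = c
  | v :: l, c, d => outdeg src v.1 ≤ c v ∧ SLegalSeq src tgt s l (sfire src tgt s c v) d

/-- The configuration obtained from `c` after firing the vertices of `l` in order. -/
def iterFire (src tgt : E → V) (c : V → ℕ) (l : List V) : V → ℕ :=
  l.foldl (fire src tgt) c

/-- The Laplacian of the digraph applied to an integer vector:
`(Δq)(v) = deg⁺(v)·q(v) − Σ_w A(w,v)·q(w)`. -/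
def lapApply (src tgt : E → V) (q : V → ℤ) : V → ℤ :=
  fun v => (outdeg src v : ℤ) * q v - ∑ w : V, (numEdges src tgt w v : ℤ) * q w

/-- `r` is the primitive period vector of the digraph: it has positive entries with
gcd `1`, lies in the kernel of the Laplacian, and generates this kernel. -/
def IsPeriodVector (src tgt : E → V) (r : V → ℕ) : Prop :=
  (∀ v : V, 0 < r v) ∧ Finset.univ.gcd r = 1 ∧
    lapApply src tgt (fun v => (r v : ℤ)) = 0 ∧
    ∀ q : V → ℤ, lapApply src tgt q = 0 → ∃ k : ℤ, q = k • fun v => (r v : ℤ)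

/-- The Laplacian matrix of the digraph. -/
def lapMatrix (src tgt : E → V) : Matrix V V ℤ :=
  Matrix.of fun v w =>
    if v = w then (outdeg src v : ℤ) - numEdges src tgt v v
    else -(numEdges src tgt w v : ℤ)

/-- The determinant of the reduced Laplacian obtained by deleting the row and
column indexed by `v`. -/
def reducedLapDet (src tgt : E → V) (v : V) : ℤ :=
  (((lapMatrix src tgt).submatrix (fun a : {w : V // w ≠ v} => a.1)
    (fun a : {w : V // w ≠ v} => a.1)).det)

/-- The period constant `α := gcd_{v ∈ V} det Δ_v`. -/
def periodConstant (src tgt : E → V) : ℤ :=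
  Finset.univ.gcd (reducedLapDet src tgt)

/-- `IsWalk l a b`: the list of edges `l` forms a directed walk from `a` to `b`. -/
def IsWalk (src tgt : E → V) : List E → V → V → Prop
  | [], a, b => a = b
  | e :: l, a, b => src e = a ∧ IsWalk src tgt l (tgt e) b

/-- `IsPath l a b`: the list of edges `l` forms a directed path from `a` to `b`:
all visited vertices are distinct (except that the final vertex is allowed to
coincide with the starting vertex). -/
def IsPath (src tgt : E → V) (l : List E) (a b : V) : Prop :=
  IsWalk src tgt l a b ∧ (l.map tgt).Nodup ∧ a ∉ (l.map tgt).dropLast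

/-- `T` is an arborescence rooted at `s`: for every vertex `v` there is a unique
directed path from `s` to `v` using only edges of `T`. -/
def IsArborescence (src tgt : E → V) (s : V) (T : Finset E) : Prop :=
  ∀ v : V, ∃! l : List E, (∀ e ∈ l, e ∈ T) ∧ IsPath src tgt l s v

/-- The edge `e ∉ T` is externally active for the arborescence `T` (w.r.t. the linear
order on `E`): where `P₁`, `P₂` are the two edge-disjoint directed paths in `T ∪ {e}`
sharing their starting vertex and ending at `tgt e`, with `e ∈ P₁`, the smallest edge
on `P₁ ++ P₂` lies on `P₁`. -/
def ExtActive [LinearOrder E] (src tgt : E → V) (T : Finset E) (e : E) : Prop :=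
  e ∉ T ∧ ∃ (u : V) (p₁ p₂ : List E),
    (∀ f ∈ p₁, f ∈ T ∨ f = e) ∧ (∀ f ∈ p₂, f ∈ T ∨ f = e) ∧
    IsPath src tgt p₁ u (tgt e) ∧ IsPath src tgt p₂ u (tgt e) ∧
    e ∈ p₁ ∧ (∀ f ∈ p₁, f ∉ p₂) ∧
    ∃ fmin ∈ p₁, ∀ f ∈ p₁ ++ p₂, fmin ≤ f

/-- The external activity `e(T)` of an arborescence `T`. -/
noncomputable def extActivity [LinearOrder E] (src tgt : E → V) (T : Finset E) : ℕ :=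
  Nat.card {e : E // ExtActive src tgt T e}

/-- The greedoid Tutte polynomial `T(G,s;y) = Σ_{T ∈ A(G,s)} y^{e(T)}`. -/
noncomputable def greedoidTutte [LinearOrder E] (src tgt : E → V) (s : V) : Polynomial ℤ :=
  ∑ᶠ T : {T : Finset E // IsArborescence src tgt s T}, X ^ extActivity src tgt T.1

/-- `f` is a `G^r`-parking function rooted at `s`. -/
def IsParking (src tgt : E → V) (s : V) (f : {v : V // v ≠ s} → ℕ) : Prop :=
  ∀ A : Finset {v : V // v ≠ s}, A.Nonempty →
    ∃ v ∈ A, f v < Nat.card {e : E // (∀ w ∈ A, src e ≠ w.1) ∧ tgt e = v.1}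

/-- The d-level of a `G^r`-parking function: `|E| − |V| + 1 − Σ_{v≠s} f(v)`. -/
noncomputable def parkDlvl (src : E → V) (s : V) (f : {v : V // v ≠ s} → ℕ) : ℕ :=
  ((Fintype.card E : ℤ) - Fintype.card V + 1 - ∑ v : {v : V // v ≠ s}, (f v : ℤ)).toNat

/-- `σ` is an s-decreasing traversal: a sequence in which every vertex and edge of `G`
appears exactly once, satisfying (R1) every vertex other than `s` is immediately
preceded by an edge targeting it, and (R2) every edge is the `<ₑ`-maximum edge not yet
seen whose source has been seen. -/
def IsTraversal [LinearOrder E] (src tgt : E → V) (s : V) (σ : List (V ⊕ E)) : Prop :=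
  σ.Nodup ∧ (∀ x : V ⊕ E, x ∈ σ) ∧
  (∀ (i : ℕ) (hi : i < σ.length) (v : V),
      σ.get ⟨i, hi⟩ = Sum.inl v → v ≠ s →
      0 < i ∧ ∃ e : E, tgt e = v ∧ σ.get ⟨i - 1, by omega⟩ = Sum.inr e) ∧
  (∀ (i : ℕ) (hi : i < σ.length) (e : E),
      σ.get ⟨i, hi⟩ = Sum.inr e →
      Sum.inl (src e) ∈ σ.take i ∧
      ∀ f : E, Sum.inr f ∉ σ.take i → Sum.inl (src f) ∈ σ.take i → f ≤ e)

open scoped Classical in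
/-- `Υ(σ)`: the set of edges immediately preceding a non-sink vertex in `σ`. -/
noncomputable def Upsilon (src tgt : E → V) (s : V) (σ : List (V ⊕ E)) : Finset E :=
  Finset.univ.filter fun e =>
    ∃ (i : ℕ) (hi : i < σ.length) (v : V), v ≠ s ∧ σ.get ⟨i, hi⟩ = Sum.inl v ∧
      0 < i ∧ ∃ hj : i - 1 < σ.length, σ.get ⟨i - 1, hj⟩ = Sum.inr e

/-- The strength of `σ`: the number of strong edges, i.e. edges whose target appears
before them in `σ`. -/
noncomputable def strength (tgt : E → V) (σ : List (V ⊕ E)) : ℕ :=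
  Nat.card {e : E // ∃ (i : ℕ) (hi : i < σ.length),
    σ.get ⟨i, hi⟩ = Sum.inr e ∧ Sum.inl (tgt e) ∈ σ.take i}

/-- `Ψ(σ)(v)`: one less than the number of edges targeting `v` that appear before the
vertex `v` in `σ`. -/
def Psi (tgt : E → V) (s : V) (σ : List (V ⊕ E)) : {v : V // v ≠ s} → ℕ :=
  fun v =>
    (((σ.takeWhile fun x => x ≠ Sum.inl v.1).filterMap Sum.getRight?).filter
      fun e => tgt e = v.1).length - 1

/-!
Embed the game with sink `s` into the sinkless game: a configuration of level `n` is determined by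
its restriction to `V ∖ {s}`, and firing the sink in the first game is the firing of `s` in the
second one, which is legal exactly while the `d`-level of the restriction is at most `n`. Hence
forgetting the chips at `s` is a bijection from the classes of recurrent configurations of level
`n` onto the `~_s`-classes of `d`-level at most `n`. In terms of generating functions,
`B(G,s;y) = (1 - y) ∑ₙ #{classes of recurrent configurations of level n} yⁿ`,
and the right-hand side does not mention `s`.
-/

section Rewriting

variable {α : Type*} {r : α → α → Prop}

/-- The one-step diamond property of a relation: two different one-step successors of an element
have a common one-step successor. -/
def HasDiamond (r : α → α → Prop) : Prop :=
  ∀ ⦃a b c⦄, r a b → r a c → b = c ∨ ∃ d, r b d ∧ r c d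

theorem HasDiamond.join (hr : HasDiamond r) {a b c : α} (hab : Relation.ReflTransGen r a b)
    (hac : Relation.ReflTransGen r a c) : Relation.Join (Relation.ReflTransGen r) b c := by
  refine Relation.church_rosser (fun a b c hab hac => ?_) hab hac
  obtain rfl | ⟨d, hbd, hcd⟩ := hr hab hac
  · exact ⟨b, .refl, .refl⟩
  · exact ⟨d, .single hbd, .single hcd⟩

theorem HasDiamond.acc_of_rel (hr : HasDiamond r) {a b : α} (hb : Acc (flip r) b) (hab : r a b) :
    Acc (flip r) a := by
  induction hb generalizing a with
  | intro b hb ih =>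
    refine ⟨a, fun c hac => ?_⟩
    obtain rfl | ⟨d, hbd, hcd⟩ := hr hab hac
    · exact ⟨b, hb⟩
    · exact ih d hbd hcd

theorem HasDiamond.acc_of_reflTransGen (hr : HasDiamond r) {a b : α}
    (hab : Relation.ReflTransGen r a b) (hb : ∀ c, ¬ r b c) : Acc (flip r) a := by
  induction hab using Relation.ReflTransGen.head_induction_on with
  | refl => exact ⟨b, fun c hbc => absurd hbc (hb c)⟩
  | head hac _ ih => exact hr.acc_of_rel ih hac

theorem not_transGen_self_of_acc {a : α} (ha : Acc (flip r) a) : ¬ Relation.TransGen r a a := by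
  rw [← Relation.transGen_swap]
  exact ha.transGen.ndrecOn (C := fun a => ¬ Relation.TransGen (Function.swap r) a a)
    fun a _ ih haa => ih a haa haa

theorem exists_reflTransGen_terminal {a : α} (ha : {b | Relation.ReflTransGen r a b}.Finite) :
    ∃ b, Relation.ReflTransGen r a b ∧
      ∀ c, Relation.ReflTransGen r b c → Relation.ReflTransGen r c b := by
  let _ : Preorder α :=
    { le := Relation.ReflTransGen r
      le_refl := fun _ => .refl
      le_trans := fun _ _ _ => .trans }
  obtain ⟨b, hab, hb⟩ := ha.exists_le_maximal (Set.mem_ofPred.2 .refl)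
  exact ⟨b, hab, fun c hbc => hb.le_of_ge (hab.trans hbc) hbc⟩

theorem exists_rank_of_reflTransGen {s : α} (hs : ∀ a, Relation.ReflTransGen r a s) :
    ∃ rank : α → ℕ, ∀ a ≠ s, ∃ b, r a b ∧ rank b < rank a := by
  classical
  let pre (S : Set α) : Set α := {a | ∃ b ∈ S, r a b}
  have hex (a : α) : ∃ n, a ∈ pre^[n] {s} := by
    induction hs a using Relation.ReflTransGen.head_induction_on with
    | refl => exact ⟨0, rfl⟩
    | @head a b hab _ ih =>
      obtain ⟨n, hn⟩ := ih
      exact ⟨n + 1, by rw [Function.iterate_succ_apply']; exact ⟨b, hn, hab⟩⟩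
  refine ⟨fun a => Nat.find (hex a), fun a ha => ?_⟩
  have hfind := Nat.find_spec (hex a)
  cases hn : Nat.find (hex a) with
  | zero => rw [hn] at hfind; exact absurd hfind ha
  | succ n =>
    rw [hn, Function.iterate_succ_apply'] at hfind
    obtain ⟨b, hb, hab⟩ := hfind
    exact ⟨b, hab, by simpa only [hn] using Nat.lt_succ_of_le (Nat.find_min' (hex b) hb)⟩

end Rewriting

section ChipStep

variable {ι : Type*} [DecidableEq ι] {t : ι → ℕ} {a : ι → ι → ℕ} {c d : ι → ℕ}

/-- One move of an abstract chip-firing game: an index `v` holding at least `t v` chips loses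
`t v` chips, and every `w` gains `a v w` chips. Both `FireStep` and `SFireStep` unfold to
instances of this relation. -/
def ChipStep (t : ι → ℕ) (a : ι → ι → ℕ) (c d : ι → ℕ) : Prop :=
  ∃ v, t v ≤ c v ∧ d = fun w => c w + a v w - if w = v then t v else 0

theorem chipStep_iff :
    ChipStep t a c d ↔ ∃ v, t v ≤ c v ∧ d + Pi.single v (t v) = c + a v := by
  refine exists_congr fun v => and_congr_right fun hv => ?_
  simp only [funext_iff, Pi.add_apply, Pi.single_apply]
  refine forall_congr' fun w => ?_
  split_ifs with hw
  · subst hw; omega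
  · omega

theorem exists_chipStep {v : ι} (hv : t v ≤ c v) :
    ∃ d, ChipStep t a c d ∧ d + Pi.single v (t v) = c + a v := by
  refine ⟨c - Pi.single v (t v) + a v, ?_⟩
  have hle : Pi.single v (t v) ≤ c := update_le_iff.2 ⟨hv, fun _ _ => Nat.zero_le _⟩
  have hd : c - Pi.single v (t v) + a v + Pi.single v (t v) = c + a v := by
    rw [add_right_comm, tsub_add_cancel_of_le hle]
  exact ⟨chipStep_iff.2 ⟨v, hv, hd⟩, hd⟩

theorem chipStep_hasDiamond : HasDiamond (ChipStep t a) := by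
  intro c d e hd he
  obtain ⟨v, hv, hd⟩ := chipStep_iff.1 hd
  obtain ⟨w, hw, he⟩ := chipStep_iff.1 he
  obtain rfl | hvw := eq_or_ne v w
  · exact .inl (add_right_cancel (hd.trans he.symm))
  have hdw : t w ≤ d w := by
    have := congrFun hd w
    simp only [Pi.add_apply, Pi.single_eq_of_ne' hvw] at this
    omega
  have hev : t v ≤ e v := by
    have := congrFun he v
    simp only [Pi.add_apply, Pi.single_eq_of_ne hvw] at this
    omega
  obtain ⟨f, hdf, hf⟩ := exists_chipStep (a := a) hdw
  refine .inr ⟨f, hdf, chipStep_iff.2 ⟨v, hev, ?_⟩⟩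
  apply add_right_cancel (b := Pi.single w (t w))
  calc f + Pi.single v (t v) + Pi.single w (t w)
      = d + Pi.single v (t v) + a w := by rw [add_right_comm, hf, add_right_comm]
    _ = e + Pi.single w (t w) + a v := by rw [hd, he, add_right_comm]
    _ = e + a v + Pi.single w (t w) := add_right_comm _ _ _

theorem ChipStep.add_right (h : ChipStep t a c d) (x : ι → ℕ) :
    ChipStep t a (c + x) (d + x) := by
  obtain ⟨v, hv, hd⟩ := chipStep_iff.1 h
  refine chipStep_iff.2 ⟨v, hv.trans (Nat.le_add_right _ _), ?_⟩
  rw [add_right_comm, hd, add_right_comm]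

theorem ChipStep.reflTransGen_add_right (h : Relation.ReflTransGen (ChipStep t a) c d)
    (x : ι → ℕ) : Relation.ReflTransGen (ChipStep t a) (c + x) (d + x) :=
  h.lift (· + x) fun _ _ hstep => hstep.add_right x

variable [Fintype ι]

theorem dotProduct_add_of_add_single_eq {v : ι} (h : d + Pi.single v (t v) = c + a v)
    (q : ι → ℕ) : d ⬝ᵥ q + t v * q v = c ⬝ᵥ q + a v ⬝ᵥ q := by
  rw [← single_dotProduct, ← add_dotProduct, h, add_dotProduct]

theorem ChipStep.sum_eq (ha : ∀ v, ∑ w, a v w = t v) (h : ChipStep t a c d) :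
    ∑ v, d v = ∑ v, c v := by
  obtain ⟨v, -, hd⟩ := chipStep_iff.1 h
  have := dotProduct_add_of_add_single_eq hd 1
  simp only [dotProduct_one, Pi.one_apply, mul_one, ha] at this
  omega

/-- The `q`-weighted number of chips strictly decreases in every move. -/
theorem exists_reflTransGen_forall_lt {q : ι → ℕ} (hq : ∀ v, a v ⬝ᵥ q < t v * q v)
    (c : ι → ℕ) : ∃ d, Relation.ReflTransGen (ChipStep t a) c d ∧ ∀ v, d v < t v := by
  induction hn : c ⬝ᵥ q using Nat.strong_induction_on generalizing c with
  | _ n ih =>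
    by_cases hc : ∀ v, c v < t v
    · exact ⟨c, .refl, hc⟩
    push Not at hc
    obtain ⟨v, hv⟩ := hc
    obtain ⟨d, hcd, hd⟩ := exists_chipStep (a := a) hv
    have hlt : d ⬝ᵥ q < n := by
      have := dotProduct_add_of_add_single_eq hd q
      have := hq v
      omega
    obtain ⟨e, hde, he⟩ := ih _ hlt d rfl
    exact ⟨e, hde.head hcd, he⟩

end ChipStep

section Stabilization

omit [DecidableEq E]

variable {src tgt : E → V} {s : V}

section

omit [Fintype V]

theorem fireStep_hasDiamond : HasDiamond (FireStep src tgt) :=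
  chipStep_hasDiamond

theorem sReach_add_right {c d : {v // v ≠ s} → ℕ} (h : SReach src tgt s c d)
    (x : {v // v ≠ s} → ℕ) : SReach src tgt s (c + x) (d + x) :=
  ChipStep.reflTransGen_add_right h x

theorem not_fireStep_of_stable {c : V → ℕ} (hc : Stable src c) (d : V → ℕ) :
    ¬ FireStep src tgt c d :=
  fun ⟨v, hv, _⟩ => (hc v).not_ge hv

theorem Stable.eq_of_reach {c d : V → ℕ} (hc : Stable src c) (hcd : Reach src tgt c d) : d = c := by
  obtain rfl | ⟨e, hce, -⟩ := Relation.ReflTransGen.cases_head hcd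
  · rfl
  · exact absurd hce (not_fireStep_of_stable hc e)

theorem SStable.eq_of_sReach {c d : {v // v ≠ s} → ℕ} (hc : SStable src s c)
    (hcd : SReach src tgt s c d) : d = c := by
  obtain rfl | ⟨e, ⟨v, hv, -⟩, -⟩ := Relation.ReflTransGen.cases_head hcd
  · rfl
  · exact absurd hv (hc v).not_ge

end

theorem sum_numEdges_mul (v : V) (q : V → ℕ) :
    ∑ w, numEdges src tgt v w * q w = ∑ e with src e = v, q (tgt e) := by
  rw [← Finset.sum_fiberwise _ tgt]
  refine Finset.sum_congr rfl fun w _ => ?_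
  rw [Finset.filter_filter, numEdges, ← smul_eq_mul, ← Finset.sum_const]
  refine Finset.sum_congr rfl fun e he => ?_
  rw [(Finset.mem_filter.1 he).2.2]

theorem sum_numEdges (v : V) : ∑ w, numEdges src tgt v w = outdeg src v := by
  simpa only [mul_one, Finset.card_eq_sum_ones, outdeg] using sum_numEdges_mul v fun _ => 1

theorem lvl_eq_of_reach {c d : V → ℕ} (h : Reach src tgt c d) : lvl d = lvl c := by
  induction h with
  | refl => rfl
  | tail _ hstep ih => exact (ChipStep.sum_eq sum_numEdges hstep).trans ih

section

omit [Fintype V] [DecidableEq V] [Fintype E]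

/-- There is an edge from `a` to `b`. -/
def Adj (src tgt : E → V) (a b : V) : Prop :=
  ∃ e, src e = a ∧ tgt e = b

/-- Every vertex has a directed path to `s`; this is what makes every `s`-configuration
stabilize. -/
def IsGlobalSink (src tgt : E → V) (s : V) : Prop :=
  ∀ v, Relation.ReflTransGen (Adj src tgt) v s

theorem StronglyConnected.isGlobalSink (hG : StronglyConnected src tgt) (s : V) :
    IsGlobalSink src tgt s :=
  fun v => hG v s

end

namespace IsGlobalSink

omit [Fintype V]

variable [Finite V] (hs : IsGlobalSink src tgt s)
include hs

/-- The weight `M ^ (D - rank v)` grows by a factor `M > outdeg src v` along an edge that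
decreases the rank. -/
theorem exists_outdeg_mul_lt_sum :
    ∃ p : V → ℕ, ∀ v ≠ s, outdeg src v * p v < ∑ e with src e = v, p (tgt e) := by
  have := Fintype.ofFinite V
  obtain ⟨rank, hrank⟩ := exists_rank_of_reflTransGen hs
  let M := Fintype.card E + 1
  let D := Finset.univ.sup rank
  refine ⟨fun v => M ^ (D - rank v), fun v hv => ?_⟩
  obtain ⟨_, ⟨e, rfl, rfl⟩, hlt⟩ := hrank v hv
  have hD : rank (src e) ≤ D := Finset.le_sup (Finset.mem_univ _)
  calc outdeg src (src e) * M ^ (D - rank (src e))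
      < M * M ^ (D - rank (src e)) :=
        Nat.mul_lt_mul_of_pos_right (Nat.lt_succ_of_le (Finset.card_le_univ _))
          (Nat.pow_pos (Nat.succ_pos _))
    _ = M ^ (D - rank (src e) + 1) := (pow_succ' _ _).symm
    _ ≤ M ^ (D - rank (tgt e)) := Nat.pow_le_pow_right (Nat.succ_pos _) (by omega)
    _ ≤ ∑ f with src f = src e, M ^ (D - rank (tgt f)) :=
        Finset.single_le_sum (f := fun f => M ^ (D - rank (tgt f))) (fun _ _ => Nat.zero_le _)
          (Finset.mem_filter.2 ⟨Finset.mem_univ e, rfl⟩)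

theorem exists_sum_lt_outdeg_mul :
    ∃ q : V → ℕ, ∀ v ≠ s, ∑ e with src e = v, q (tgt e) < outdeg src v * q v := by
  have := Fintype.ofFinite V
  obtain ⟨p, hp⟩ := hs.exists_outdeg_mul_lt_sum
  let B := Finset.univ.sup p
  have hB (v : V) : B - p v + p v = B := Nat.sub_add_cancel (Finset.le_sup (Finset.mem_univ v))
  refine ⟨fun v => B - p v, fun v hv => ?_⟩
  have hsum : ∑ e with src e = v, (B - p (tgt e)) + ∑ e with src e = v, p (tgt e)
      = outdeg src v * (B - p v) + outdeg src v * p v := by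
    rw [← Finset.sum_add_distrib, ← Nat.mul_add, hB, outdeg, ← smul_eq_mul, ← Finset.sum_const]
    exact Finset.sum_congr rfl fun e _ => hB _
  have := hp v hv
  dsimp only
  omega

theorem exists_sReach_sStable (c : {v // v ≠ s} → ℕ) :
    ∃ d, SReach src tgt s c d ∧ SStable src s d := by
  have := Fintype.ofFinite V
  obtain ⟨q, hq⟩ := hs.exists_sum_lt_outdeg_mul
  refine exists_reflTransGen_forall_lt (t := fun v : {v // v ≠ s} => outdeg src v.1)
    (q := fun v => q v.1) (fun v => ?_) c
  calc ∑ w : {w // w ≠ s}, numEdges src tgt v.1 w.1 * q w.1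
      ≤ ∑ w, numEdges src tgt v.1 w * q w := by
        rw [Fintype.sum_eq_add_sum_subtype_ne _ s]
        exact Nat.le_add_left _ _
    _ = ∑ e with src e = v.1, q (tgt e) := sum_numEdges_mul v.1 q
    _ < outdeg src v.1 * q v.1 := hq v.1 v.2

theorem stab_spec (c : {v // v ≠ s} → ℕ) :
    SReach src tgt s c (stab src tgt s c) ∧ SStable src s (stab src tgt s c) :=
  Classical.epsilon_spec (hs.exists_sReach_sStable c)

theorem sReach_stab (c : {v // v ≠ s} → ℕ) : SReach src tgt s c (stab src tgt s c) :=
  (hs.stab_spec c).1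

theorem sStable_stab (c : {v // v ≠ s} → ℕ) : SStable src s (stab src tgt s c) :=
  (hs.stab_spec c).2

theorem stab_eq_stab_of_sReach {c d : {v // v ≠ s} → ℕ} (hcd : SReach src tgt s c d) :
    stab src tgt s c = stab src tgt s d := by
  obtain ⟨e, hce, hde⟩ :=
    chipStep_hasDiamond.join (hs.sReach_stab c) (hcd.trans (hs.sReach_stab d))
  rw [← (hs.sStable_stab c).eq_of_sReach hce, ← (hs.sStable_stab d).eq_of_sReach hde]

theorem stab_eq_self {c : {v // v ≠ s} → ℕ} (hc : SStable src s c) : stab src tgt s c = c :=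
  hc.eq_of_sReach (hs.sReach_stab c)

theorem stab_stab_add (c x : {v // v ≠ s} → ℕ) :
    stab src tgt s (stab src tgt s c + x) = stab src tgt s (c + x) :=
  (hs.stab_eq_stab_of_sReach (sReach_add_right (hs.sReach_stab c) x)).symm

end IsGlobalSink

end Stabilization

section SinkFiring

omit [Fintype V] [DecidableEq E]

variable {src tgt : E → V} {s : V}

/-- The stable `s`-configuration obtained from `c` by firing the sink `k` times. The relation
`SEquiv src tgt s c d` says that `d = fireSink src tgt s k c` for some `k`. -/
noncomputable def fireSink (src tgt : E → V) (s : V) (k : ℕ) (c : {v // v ≠ s} → ℕ) :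
    {v // v ≠ s} → ℕ :=
  stab src tgt s (c + k • betaS src tgt s)

theorem fireSink_add_betaS (k : ℕ) (c : {v // v ≠ s} → ℕ) :
    fireSink src tgt s k (c + betaS src tgt s) = fireSink src tgt s (k + 1) c := by
  rw [fireSink, fireSink, add_assoc, ← succ_nsmul']

theorem SRecurrent.exists_fireSink_eq {c : {v // v ≠ s} → ℕ} (hc : SRecurrent src tgt s c)
    (k : ℕ) : ∃ x, fireSink src tgt s k x = c := by
  obtain ⟨x, hx⟩ := hc (k • betaS src tgt s)
  exact ⟨x, by rw [fireSink, add_comm, hx]⟩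

theorem finite_sStable [Finite V] : {c | SStable src s c}.Finite := by
  have := Fintype.ofFinite V
  exact (Set.finite_Iic fun v : {v // v ≠ s} => outdeg src v.1).subset fun _ hc v => (hc v).le

namespace IsGlobalSink

variable [Finite V] (hs : IsGlobalSink src tgt s)
include hs

theorem sStable_of_sRecurrent {c : {v // v ≠ s} → ℕ} (hc : SRecurrent src tgt s c) :
    SStable src s c := by
  obtain ⟨x, rfl⟩ := hc 0
  exact hs.sStable_stab _

theorem finite_recS : Finite (RecS src tgt s) :=
  (finite_sStable.subset fun _ hc => hs.sStable_of_sRecurrent hc).to_subtype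

theorem fireSink_zero {c : {v // v ≠ s} → ℕ} (hc : SStable src s c) :
    fireSink src tgt s 0 c = c := by
  rw [fireSink, zero_smul, add_zero, hs.stab_eq_self hc]

theorem fireSink_fireSink (k l : ℕ) (c : {v // v ≠ s} → ℕ) :
    fireSink src tgt s k (fireSink src tgt s l c) = fireSink src tgt s (k + l) c := by
  rw [fireSink, fireSink, fireSink, hs.stab_stab_add, add_assoc, ← add_smul, add_comm l]

theorem fireSink_add (k : ℕ) (c x : {v // v ≠ s} → ℕ) :
    fireSink src tgt s k (c + x) = stab src tgt s (fireSink src tgt s k c + x) := by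
  rw [fireSink, fireSink, hs.stab_stab_add, add_right_comm]

/-- By the pigeonhole principle the sequence `fireSink k 0` is eventually periodic, and adding `c`
preserves its period. -/
theorem exists_fireSink_period :
    ∃ i m, 0 < m ∧ ∀ t c, fireSink src tgt s (i + t * m) c = fireSink src tgt s i c := by
  obtain ⟨i, j, hij, hzero⟩ := Set.Finite.exists_lt_map_eq_of_forall_mem
    (f := fun k => fireSink src tgt s k 0) (fun k => hs.sStable_stab _) finite_sStable
  obtain ⟨m, hm, rfl⟩ := exists_pos_add_of_lt' hij
  have hshift (c) : fireSink src tgt s (i + m) c = fireSink src tgt s i c := by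
    rw [← zero_add c, hs.fireSink_add, hs.fireSink_add, hzero]
  refine ⟨i, m, hm, fun t c => ?_⟩
  induction t with
  | zero => rw [zero_mul, add_zero]
  | succ t ih =>
    calc fireSink src tgt s (i + (t + 1) * m) c
        = fireSink src tgt s (t * m) (fireSink src tgt s (i + m) c) := by
          rw [hs.fireSink_fireSink, add_one_mul, add_left_comm]
      _ = fireSink src tgt s (i + t * m) c := by
          rw [hshift, hs.fireSink_fireSink, add_comm]
      _ = fireSink src tgt s i c := ih

theorem sRecurrent_fireSink {c : {v // v ≠ s} → ℕ} (hc : SRecurrent src tgt s c) (k : ℕ) :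
    SRecurrent src tgt s (fireSink src tgt s k c) := by
  intro x
  obtain ⟨y, rfl⟩ := hc x
  exact ⟨y + k • betaS src tgt s, by rw [fireSink, hs.stab_stab_add, add_assoc]⟩

theorem exists_fireSink_fireSink_eq {c : {v // v ≠ s} → ℕ} (hc : SRecurrent src tgt s c)
    (k : ℕ) : ∃ l, fireSink src tgt s l (fireSink src tgt s k c) = c := by
  obtain ⟨i, m, hm, hperiod⟩ := hs.exists_fireSink_period
  obtain ⟨x, rfl⟩ := hc.exists_fireSink_eq i
  refine ⟨k * m - k, ?_⟩
  rw [hs.fireSink_fireSink, Nat.sub_add_cancel (Nat.le_mul_of_pos_right k hm),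
    hs.fireSink_fireSink, add_comm, hperiod]

end IsGlobalSink

/-- The configurations that lie below one reachable by `s`-firings from a multiple of `β_s`. -/
def sinkDominated (src tgt : E → V) (s : V) : AddSubmonoid ({v // v ≠ s} → ℕ) where
  carrier := {c | ∃ (k : ℕ) (d : _), SReach src tgt s (k • betaS src tgt s) d ∧ c ≤ d}
  zero_mem' := ⟨0, 0 • betaS src tgt s, Relation.ReflTransGen.refl, fun _ => Nat.zero_le _⟩
  add_mem' := by
    rintro c c' ⟨k, d, hd, hcd⟩ ⟨k', d', hd', hcd'⟩
    refine ⟨k + k', d + d', ?_, add_le_add hcd hcd'⟩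
    rw [add_smul]
    refine (sReach_add_right hd _).trans ?_
    rw [add_comm d, add_comm d]
    exact sReach_add_right hd' d

theorem mem_sinkDominated_iff {c : {v // v ≠ s} → ℕ} : c ∈ sinkDominated src tgt s ↔
    ∃ (k : ℕ) (d : _), SReach src tgt s (k • betaS src tgt s) d ∧ c ≤ d :=
  .rfl

theorem numEdges_pos {u v : V} (h : Adj src tgt u v) : 0 < numEdges src tgt u v := by
  obtain ⟨e, he⟩ := h
  exact Finset.card_pos.2 ⟨e, Finset.mem_filter.2 ⟨Finset.mem_univ e, he⟩⟩

theorem single_mem_sinkDominated {v : V} (h : Relation.ReflTransGen (Adj src tgt) s v)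
    (hv : v ≠ s) : Pi.single ⟨v, hv⟩ 1 ∈ sinkDominated src tgt s := by
  have hsingle {v : {v // v ≠ s}} {d : {v // v ≠ s} → ℕ} (h : 1 ≤ d v) : Pi.single v 1 ≤ d :=
    update_le_iff.2 ⟨h, fun _ _ => Nat.zero_le _⟩
  induction h with
  | refl => exact absurd rfl hv
  | @tail u v _ huv ih =>
    obtain rfl | hu := eq_or_ne u s
    · refine mem_sinkDominated_iff.2 ⟨1, _, .refl, hsingle ?_⟩
      rw [one_smul]
      exact numEdges_pos huv
    obtain rfl | hne := eq_or_ne v u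
    · exact ih hu
    obtain ⟨k, d, hd, hle⟩ :=
      mem_sinkDominated_iff.1 (nsmul_mem (ih hu) (outdeg src u))
    have hfire : outdeg src u ≤ d ⟨u, hu⟩ := by simpa using hle ⟨u, hu⟩
    obtain ⟨f, hdf, hf⟩ := exists_chipStep (t := fun w : {w // w ≠ s} => outdeg src w.1)
      (a := fun u w => numEdges src tgt u.1 w.1) (v := ⟨u, hu⟩) hfire
    refine mem_sinkDominated_iff.2 ⟨k, f, hd.tail hdf, hsingle ?_⟩
    have hfv := congrFun hf ⟨v, hv⟩
    have hpos := numEdges_pos huv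
    simp only [Pi.add_apply, ne_eq, Subtype.mk.injEq, hne, not_false_eq_true,
      Pi.single_eq_of_ne, add_zero] at hfv
    omega

variable [Finite V]

theorem StronglyConnected.mem_sinkDominated (hG : StronglyConnected src tgt)
    (c : {v // v ≠ s} → ℕ) : c ∈ sinkDominated src tgt s := by
  have := Fintype.ofFinite V
  rw [← Finset.univ_sum_single c]
  refine sum_mem fun v _ => ?_
  have := nsmul_mem (single_mem_sinkDominated (hG s v.1) v.2) (c v)
  rwa [← Pi.single_smul, smul_eq_mul, mul_one] at this

theorem StronglyConnected.exists_sRecurrent_fireSink (hG : StronglyConnected src tgt)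
    (x : {v // v ≠ s} → ℕ) : ∃ k, SRecurrent src tgt s (fireSink src tgt s k x) := by
  have hs := hG.isGlobalSink s
  obtain ⟨i, m, hm, hperiod⟩ := hs.exists_fireSink_period
  refine ⟨i, fun c => ?_⟩
  obtain ⟨k, d, hd, hcd⟩ := mem_sinkDominated_iff.1 (hG.mem_sinkDominated c)
  have hk : k ≤ i + k * m := (Nat.le_mul_of_pos_right k hm).trans (Nat.le_add_left _ _)
  let y := x + (i + k * m - k) • betaS src tgt s
  refine ⟨d - c + y, ?_⟩
  calc stab src tgt s (c + (d - c + y))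
      = stab src tgt s (d + y) := by rw [← add_assoc, add_tsub_cancel_of_le hcd]
    _ = stab src tgt s (k • betaS src tgt s + y) :=
        (hs.stab_eq_stab_of_sReach (sReach_add_right hd y)).symm
    _ = fireSink src tgt s (i + k * m) x := by
        rw [fireSink, add_left_comm, ← add_smul, Nat.add_sub_cancel' hk]
    _ = fireSink src tgt s i x := hperiod k x

end SinkFiring

section SinkClasses

omit [DecidableEq E]

variable {src tgt : E → V} {s : V}

section

omit [Fintype V]

variable [Finite V]

namespace IsGlobalSink

variable (hs : IsGlobalSink src tgt s)
include hs

theorem equivalence_sEquiv :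
    Equivalence fun a b : RecS src tgt s => SEquiv src tgt s a.1 b.1 where
  refl a := ⟨0, hs.fireSink_zero (hs.sStable_of_sRecurrent a.2)⟩
  symm := by
    rintro a ⟨_, hb⟩ ⟨k, rfl⟩
    exact hs.exists_fireSink_fireSink_eq a.2 k
  trans := by
    rintro a ⟨_, hb⟩ ⟨_, hc⟩ ⟨k, rfl⟩ ⟨l, rfl⟩
    exact ⟨l + k, (hs.fireSink_fireSink l k a.1).symm⟩

theorem mk_eq_mk_iff {a b : RecS src tgt s} :
    Quotient.mk (recSSetoid src tgt s) a = Quotient.mk (recSSetoid src tgt s) b ↔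
      ∃ k, fireSink src tgt s k a.1 = b.1 :=
  Quotient.eq.trans hs.equivalence_sEquiv.eqvGen_iff

end IsGlobalSink

/-- The `~_s`-class of the recurrent configurations that an arbitrary `s`-configuration `x` turns
into when the sink is fired often enough. -/
noncomputable def sinkClass (hG : StronglyConnected src tgt) (x : {v // v ≠ s} → ℕ) :
    RecSQuot src tgt s :=
  Quotient.mk _ ⟨_, (hG.exists_sRecurrent_fireSink x).choose_spec⟩

variable (hG : StronglyConnected src tgt)

theorem exists_sinkClass_eq_mk (x : {v // v ≠ s} → ℕ) :
    ∃ (k : ℕ) (hk : SRecurrent src tgt s (fireSink src tgt s k x)),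
      sinkClass hG x = Quotient.mk _ ⟨_, hk⟩ :=
  ⟨_, _, rfl⟩

theorem sinkClass_eq_sinkClass_iff {x y : {v // v ≠ s} → ℕ} :
    sinkClass hG x = sinkClass hG y ↔
      ∃ k l, fireSink src tgt s k x = fireSink src tgt s l y := by
  have hs := hG.isGlobalSink s
  obtain ⟨i, hi, hx⟩ := exists_sinkClass_eq_mk hG x
  obtain ⟨j, hj, hy⟩ := exists_sinkClass_eq_mk hG y
  rw [hx, hy, hs.mk_eq_mk_iff]
  simp only [hs.fireSink_fireSink]
  refine ⟨fun ⟨k, h⟩ => ⟨k + i, j, h⟩, fun ⟨k, l, h⟩ => ?_⟩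
  obtain ⟨m, hm⟩ := hs.exists_fireSink_fireSink_eq hj (i + l)
  refine ⟨m + j + k, ?_⟩
  calc fireSink src tgt s (m + j + k + i) x
      = fireSink src tgt s (m + j + i) (fireSink src tgt s k x) := by
        rw [hs.fireSink_fireSink, add_right_comm]
    _ = fireSink src tgt s m (fireSink src tgt s (i + l) (fireSink src tgt s j y)) := by
        simp only [h, hs.fireSink_fireSink]
        congr 1
        omega
    _ = fireSink src tgt s j y := hm

theorem sinkClass_coe (a : RecS src tgt s) : sinkClass hG a.1 = Quotient.mk _ a := by
  have hs := hG.isGlobalSink s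
  obtain ⟨k, hk, ha⟩ := exists_sinkClass_eq_mk hG a.1
  exact ha.trans (hs.mk_eq_mk_iff.2 ⟨k, rfl⟩).symm

end

theorem IsGlobalSink.dlvlClass_mk_le_iff (hs : IsGlobalSink src tgt s) {a : RecS src tgt s}
    {n : ℕ} :
    dlvlClass src tgt s (Quotient.mk _ a) ≤ n ↔
      ∀ k, dlvl src s (fireSink src tgt s k a.1) ≤ n := by
  have := hs.finite_recS
  have hne : {b | Quotient.mk (recSSetoid src tgt s) b = Quotient.mk _ a}.Nonempty := ⟨a, rfl⟩
  rw [dlvlClass, csSup_le_iff (Set.toFinite _).bddAbove (hne.image _), Set.forall_mem_image]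
  refine ⟨fun h k => ?_, ?_⟩
  · exact h (hs.mk_eq_mk_iff (b := ⟨_, hs.sRecurrent_fireSink a.2 k⟩).2 ⟨k, rfl⟩).symm
  · rintro h ⟨_, hb⟩ hab
    obtain ⟨k, rfl⟩ := hs.mk_eq_mk_iff.1 (Eq.symm hab)
    exact h k

theorem dlvlClass_sinkClass_le (hG : StronglyConnected src tgt) {x : {v // v ≠ s} → ℕ} {n : ℕ}
    (h : ∀ k, dlvl src s (fireSink src tgt s k x) ≤ n) :
    dlvlClass src tgt s (sinkClass hG x) ≤ n := by
  have hs := hG.isGlobalSink s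
  obtain ⟨i, hi, hx⟩ := exists_sinkClass_eq_mk hG x
  rw [hx, hs.dlvlClass_mk_le_iff]
  intro k
  rw [hs.fireSink_fireSink]
  exact h (k + i)

end SinkClasses

section SinklessModel

omit [DecidableEq E]

variable {src tgt : E → V} {s : V} {c d : V → ℕ}

section

omit [Fintype V]

theorem restrictS_fire_coe (v : {v // v ≠ s}) :
    restrictS s (fire src tgt c v.1) = sfire src tgt s (restrictS s c) v := by
  funext w
  simp only [restrictS, fire, sfire, Subtype.ext_iff]

theorem restrictS_fire_self :
    restrictS s (fire src tgt c s) = restrictS s c + betaS src tgt s := by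
  funext w
  simp only [restrictS, fire, betaS, Pi.add_apply, if_neg w.2, tsub_zero]

theorem exists_reach_of_sReach {x : {v // v ≠ s} → ℕ}
    (h : SReach src tgt s (restrictS s c) x) : ∃ d, Reach src tgt c d ∧ restrictS s d = x := by
  induction h with
  | refl => exact ⟨c, .refl, rfl⟩
  | tail _ hstep ih =>
    obtain ⟨d, hcd, rfl⟩ := ih
    obtain ⟨v, hv, rfl⟩ := hstep
    exact ⟨_, hcd.tail ⟨v.1, hv, rfl⟩, restrictS_fire_coe v⟩

theorem exists_sReach_of_reach (s : V) (h : Reach src tgt c d) :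
    ∃ k : ℕ, SReach src tgt s (restrictS s c + k • betaS src tgt s) (restrictS s d) := by
  induction h with
  | refl => exact ⟨0, by rw [zero_smul, add_zero]; exact .refl⟩
  | tail _ hstep ih =>
    obtain ⟨k, hk⟩ := ih
    obtain ⟨v, hv, rfl⟩ := hstep
    obtain rfl | hvs := eq_or_ne v s
    · refine ⟨k + 1, ?_⟩
      rw [restrictS_fire_self, succ_nsmul, ← add_assoc]
      exact sReach_add_right hk _
    · exact ⟨k, hk.tail ⟨⟨v, hvs⟩, hv, restrictS_fire_coe ⟨v, hvs⟩⟩⟩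

theorem Recurrent.of_reach (hc : Recurrent src tgt c) (hcd : Reach src tgt c d) :
    Recurrent src tgt d := by
  refine ⟨fun hd => hc.1 ?_, fun e hde => (hc.2 e (hcd.trans hde)).trans hcd⟩
  rwa [hd.eq_of_reach (hc.2 d hcd)]

end

section

omit [Fintype E]

theorem lvl_eq_add_sum_restrictS (s : V) (c : V → ℕ) :
    lvl c = c s + ∑ v : {v // v ≠ s}, restrictS s c v :=
  Fintype.sum_eq_add_sum_subtype_ne c s

omit [DecidableEq V] in
theorem eq_of_restrictS_eq_of_lvl_eq (hr : restrictS s c = restrictS s d)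
    (hl : lvl c = lvl d) : c = d := by
  classical
  rw [lvl_eq_add_sum_restrictS s c, lvl_eq_add_sum_restrictS s d, hr] at hl
  funext v
  obtain rfl | hv := eq_or_ne v s
  · exact Nat.add_right_cancel hl
  · exact congrFun hr ⟨v, hv⟩

theorem exists_restrictS_eq_lvl_eq {x : {v // v ≠ s} → ℕ} {n : ℕ} (hx : ∑ v, x v ≤ n) :
    ∃ c, restrictS s c = x ∧ lvl c = n := by
  refine ⟨extendS s x + (n - ∑ v, x v) • deltaS s, ?_⟩
  have hr : restrictS s (extendS s x + (n - ∑ v, x v) • deltaS s) = x := by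
    funext v
    simp [restrictS, extendS, deltaS, v.2]
  refine ⟨hr, ?_⟩
  rw [lvl_eq_add_sum_restrictS s, hr]
  simp [extendS, deltaS, hx]

end

theorem dlvl_restrictS_le_lvl_iff :
    dlvl src s (restrictS s c) ≤ lvl c ↔ outdeg src s ≤ c s := by
  rw [dlvl, lvl_eq_add_sum_restrictS s, Nat.add_le_add_iff_right]

omit [Fintype V] in
/-- Only finitely many configurations are reachable, since they all have the same level, and a
configuration on a cycle cannot reach a stable one. -/
theorem exists_recurrent_of_transGen_self [Finite V]
    (h : Relation.TransGen (FireStep src tgt) c c) :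
    ∃ d, Reach src tgt c d ∧ Recurrent src tgt d := by
  have := Fintype.ofFinite V
  have hfin : {d | Reach src tgt c d}.Finite :=
    (Set.finite_Iic fun _ => lvl c).subset fun d hcd v =>
      (Finset.single_le_sum (fun _ _ => Nat.zero_le _) (Finset.mem_univ v)).trans_eq
        (lvl_eq_of_reach hcd)
  obtain ⟨d, hcd, hd⟩ := exists_reflTransGen_terminal hfin
  refine ⟨d, hcd, fun hstable => not_transGen_self_of_acc ?_ h, hd⟩
  exact fireStep_hasDiamond.acc_of_reflTransGen hcd (not_fireStep_of_stable hstable)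

namespace IsGlobalSink

variable (hs : IsGlobalSink src tgt s)
include hs

omit [Fintype V] in
theorem exists_fireSink_eq_of_reach [Finite V] (h : Reach src tgt c d) :
    ∃ k, fireSink src tgt s k (restrictS s c) = fireSink src tgt s 0 (restrictS s d) := by
  obtain ⟨k, hk⟩ := exists_sReach_of_reach s h
  refine ⟨k, (hs.stab_eq_stab_of_sReach hk).trans ?_⟩
  rw [fireSink, zero_smul, add_zero]

/-- While the `d`-levels stay below the level of `c`, the vertex `s` keeps enough chips to be fired
legally in the sinkless game. -/
theorem exists_reach_restrictS_eq_fireSink {k : ℕ}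
    (h : ∀ j < k, dlvl src s (fireSink src tgt s j (restrictS s c)) ≤ lvl c) :
    ∃ d, Reach src tgt c d ∧ restrictS s d = fireSink src tgt s k (restrictS s c) := by
  induction k with
  | zero =>
    rw [fireSink, zero_smul, add_zero]
    exact exists_reach_of_sReach (hs.sReach_stab _)
  | succ k ih =>
    obtain ⟨d, hcd, hd⟩ := ih fun j hj => h j (hj.trans k.lt_succ_self)
    have hlegal : outdeg src s ≤ d s := by
      rw [← dlvl_restrictS_le_lvl_iff, hd, lvl_eq_of_reach hcd]
      exact h k k.lt_succ_self
    obtain ⟨e, hde, he⟩ := exists_reach_of_sReach (hs.sReach_stab (restrictS s (fire src tgt d s)))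
    refine ⟨e, (hcd.tail ⟨s, hlegal, rfl⟩).trans hde, ?_⟩
    rw [he, restrictS_fire_self, hd, ← hs.fireSink_add, fireSink_add_betaS]

theorem dlvl_fireSink_restrictS_le_lvl (hc : Recurrent src tgt c) (k : ℕ) :
    dlvl src s (fireSink src tgt s k (restrictS s c)) ≤ lvl c := by
  induction k using Nat.strong_induction_on with
  | _ k ih =>
    obtain ⟨d, hcd, hd⟩ := hs.exists_reach_restrictS_eq_fireSink ih
    rw [← hd, ← lvl_eq_of_reach hcd, dlvl_restrictS_le_lvl_iff]
    by_contra! hlt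
    refine (hc.of_reach hcd).1 fun v => ?_
    obtain rfl | hv := eq_or_ne v s
    · exact hlt
    · have hstable : SStable src s (restrictS s d) := hd ▸ hs.sStable_stab _
      exact hstable ⟨v, hv⟩

theorem transGen_self_of_sRecurrent_restrictS (hc : SRecurrent src tgt s (restrictS s c))
    (h : ∀ k, dlvl src s (fireSink src tgt s k (restrictS s c)) ≤ lvl c) :
    Relation.TransGen (FireStep src tgt) c c := by
  have hlegal : outdeg src s ≤ c s := by
    rw [← dlvl_restrictS_le_lvl_iff, ← hs.fireSink_zero (hs.sStable_of_sRecurrent hc)]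
    exact h 0
  have hstep : FireStep src tgt c (fire src tgt c s) := ⟨s, hlegal, rfl⟩
  have hshift (k : ℕ) : fireSink src tgt s k (restrictS s (fire src tgt c s)) =
      fireSink src tgt s (k + 1) (restrictS s c) := by
    rw [restrictS_fire_self, fireSink_add_betaS]
  have hlvl : lvl (fire src tgt c s) = lvl c := lvl_eq_of_reach (.single hstep)
  obtain ⟨k, hk⟩ := hs.exists_fireSink_fireSink_eq hc 1
  obtain ⟨d, hcd, hd⟩ := hs.exists_reach_restrictS_eq_fireSink (c := fire src tgt c s) (k := k)
    fun j _ => by rw [hshift, hlvl]; exact h _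
  have hdc : d = c := by
    refine eq_of_restrictS_eq_of_lvl_eq (s := s) ?_ ((lvl_eq_of_reach hcd).trans hlvl)
    rw [hd, hshift, ← hs.fireSink_fireSink, hk]
  exact .head' hstep (hdc ▸ hcd)

end IsGlobalSink

end SinklessModel

section RecurrentClasses

omit [DecidableEq E]

variable {src tgt : E → V}

section

omit [Fintype V]

theorem equivalence_reach :
    Equivalence fun a b : RecL src tgt => Reach src tgt a.1 b.1 where
  refl _ := .refl
  symm {a b} h := a.2.2 b.1 h
  trans := .trans

theorem mk_recL_eq_mk_iff {a b : RecL src tgt} :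
    Quotient.mk (recLSetoid src tgt) a = Quotient.mk (recLSetoid src tgt) b ↔
      Reach src tgt a.1 b.1 :=
  Quotient.eq.trans equivalence_reach.eqvGen_iff

end

theorem lvlClass_mk (c : RecL src tgt) : lvlClass src tgt (Quotient.mk _ c) = lvl c.1 := by
  have himage : (fun d : RecL src tgt => lvl d.1) ''
      {d | Quotient.mk (recLSetoid src tgt) d = Quotient.mk _ c} = {lvl c.1} := by
    refine (Set.eq_singleton_iff_unique_mem).2 ⟨⟨c, rfl, rfl⟩, ?_⟩
    rintro _ ⟨d, hd, rfl⟩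
    exact (lvl_eq_of_reach (mk_recL_eq_mk_iff.1 hd)).symm
  rw [lvlClass, himage, csSup_singleton]

variable (hG : StronglyConnected src tgt) (s : V)

omit [Fintype V] in
theorem sinkClass_restrictS_eq_of_reach [Finite V] {c d : V → ℕ} (h : Reach src tgt c d) :
    sinkClass hG (restrictS s c) = sinkClass hG (restrictS s d) := by
  obtain ⟨k, hk⟩ := (hG.isGlobalSink s).exists_fireSink_eq_of_reach h
  exact (sinkClass_eq_sinkClass_iff hG).2 ⟨k, 0, hk⟩

omit [Fintype V] in
/-- The map on classes of recurrent configurations induced by forgetting the chips at `s`. -/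
noncomputable def recLQuotToRecSQuot [Finite V] : RecLQuot src tgt → RecSQuot src tgt s :=
  Quotient.lift (fun c => sinkClass hG (restrictS s c.1)) fun _ _ h =>
    sinkClass_restrictS_eq_of_reach hG s (mk_recL_eq_mk_iff.1 (Quotient.sound h))

theorem mapsTo_recLQuotToRecSQuot (n : ℕ) :
    Set.MapsTo (recLQuotToRecSQuot hG s)
      {q | lvlClass src tgt q = n} {q | dlvlClass src tgt s q ≤ n} := by
  rintro ⟨c⟩ (rfl : lvlClass src tgt (Quotient.mk _ c) = n)
  rw [lvlClass_mk]
  exact dlvlClass_sinkClass_le hG ((hG.isGlobalSink s).dlvl_fireSink_restrictS_le_lvl c.2)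

theorem injOn_recLQuotToRecSQuot (n : ℕ) :
    Set.InjOn (recLQuotToRecSQuot hG s) {q | lvlClass src tgt q = n} := by
  have hs := hG.isGlobalSink s
  rintro ⟨c⟩ (hc : lvlClass src tgt (Quotient.mk _ c) = n)
    ⟨d⟩ (hd : lvlClass src tgt (Quotient.mk _ d) = n) hcd
  rw [lvlClass_mk] at hc hd
  obtain ⟨k, l, hkl⟩ := (sinkClass_eq_sinkClass_iff hG).1 hcd
  obtain ⟨c', hcc', hc'⟩ := hs.exists_reach_restrictS_eq_fireSink fun j (_ : j < k) =>
    hs.dlvl_fireSink_restrictS_le_lvl c.2 j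
  obtain ⟨d', hdd', hd'⟩ := hs.exists_reach_restrictS_eq_fireSink fun j (_ : j < l) =>
    hs.dlvl_fireSink_restrictS_le_lvl d.2 j
  have hc'd' : c' = d' := by
    apply eq_of_restrictS_eq_of_lvl_eq (hc'.trans (hkl.trans hd'.symm))
    rw [lvl_eq_of_reach hcc', lvl_eq_of_reach hdd', hc, hd]
  subst hc'd'
  exact mk_recL_eq_mk_iff.2 (hcc'.trans (d.2.2 _ hdd'))

theorem surjOn_recLQuotToRecSQuot (n : ℕ) :
    Set.SurjOn (recLQuotToRecSQuot hG s)
      {q | lvlClass src tgt q = n} {q | dlvlClass src tgt s q ≤ n} := by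
  have hs := hG.isGlobalSink s
  rintro ⟨a⟩ (ha : dlvlClass src tgt s (Quotient.mk _ a) ≤ n)
  rw [hs.dlvlClass_mk_le_iff] at ha
  have hsum : ∑ v, a.1 v ≤ n := by
    have := ha 0
    rw [hs.fireSink_zero (hs.sStable_of_sRecurrent a.2)] at this
    exact (Nat.le_add_left _ _).trans this
  obtain ⟨c, hca, rfl⟩ := exists_restrictS_eq_lvl_eq hsum
  rw [← hca] at ha
  obtain ⟨d, hcd, hd⟩ := exists_recurrent_of_transGen_self
    (hs.transGen_self_of_sRecurrent_restrictS (hca.symm ▸ a.2) ha)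
  refine ⟨Quotient.mk _ ⟨d, hd⟩, (lvlClass_mk _).trans (lvl_eq_of_reach hcd), ?_⟩
  calc sinkClass hG (restrictS s d)
      = sinkClass hG (restrictS s c) := (sinkClass_restrictS_eq_of_reach hG s hcd).symm
    _ = Quotient.mk _ a := by rw [hca, sinkClass_coe]

include hG in
theorem ncard_lvlClass_eq_ncard_dlvlClass_le (n : ℕ) :
    {q | lvlClass src tgt q = n}.ncard = {q | dlvlClass src tgt s q ≤ n}.ncard :=
  Set.BijOn.ncard_eq (f := recLQuotToRecSQuot hG s)
    ⟨mapsTo_recLQuotToRecSQuot hG s n, injOn_recLQuotToRecSQuot hG s n,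
      surjOn_recLQuotToRecSQuot hG s n⟩

end RecurrentClasses

section GeneratingFunction

theorem coe_finsum_X_pow {α R : Type*} [Finite α] [CommRing R] (f : α → ℕ) :
    ((∑ᶠ a, X ^ f a : R[X]) : PowerSeries R) =
      (1 - PowerSeries.X) * PowerSeries.mk fun n => ({a | f a ≤ n}.ncard : R) := by
  have := Fintype.ofFinite α
  have hgeom : PowerSeries.mk (fun n => ({a | f a ≤ n}.ncard : R)) =
      PowerSeries.mk 1 * ∑ a, PowerSeries.X ^ f a := by
    ext n
    simp_rw [Finset.mul_sum, map_sum, PowerSeries.coeff_mul_X_pow', PowerSeries.coeff_mk,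
      Pi.one_apply, Finset.sum_boole, Set.ncard_eq_toFinset_card']
    simp
  rw [hgeom, mul_left_comm, ← mul_assoc, PowerSeries.mk_one_mul_one_sub_eq_one, one_mul,
    finsum_eq_sum_of_fintype, ← Polynomial.coeToPowerSeries.ringHom_apply, map_sum]
  simp only [map_pow, Polynomial.coeToPowerSeries.ringHom_apply, Polynomial.coe_X]

variable {src tgt : E → V}

omit [DecidableEq E] in
theorem coe_BM_eq (hG : StronglyConnected src tgt) (s : V) :
    (BM src tgt s : PowerSeries ℤ) = (1 - PowerSeries.X) *
      PowerSeries.mk fun n => ({q | lvlClass src tgt q = n}.ncard : ℤ) := by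
  have := (hG.isGlobalSink s).finite_recS
  simp only [BM, coe_finsum_X_pow, ncard_lvlClass_eq_ncard_dlvlClass_le hG s]

end GeneratingFunction

/-- For a strongly connected digraph, the Biggs–Merino polynomial
does not depend on the choice of the sink vertex. -/
theorem biggsMerino_sink_independent [Nonempty V] (src tgt : E → V)
    (hG : StronglyConnected src tgt) (s s' : V) :
    BM src tgt s = BM src tgt s' := by
  apply Polynomial.coe_injective ℤ
  rw [coe_BM_eq hG s, coe_BM_eq hG s']

end SandpileBM
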